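/- For every integer n ≥ 2: (1) the set X = cl((1+2^n)^ℕ) ∈ 𝒳_2 coincides with 1+2^nℕ₀ and has i(X) = 2^{n-1}; (2) the set Y = cl((2^n-1)^ℕ) ∈ 𝒳_2 coincides with (1+2^{n+1}ℕ₀) ∪ (2^n-1+2^{n+1}ℕ₀) and has i(Y) = 2^{n-1}. -/

import Mathlib

open TopologicalSpace

/-- The arithmetic progression `a + bℕ₀ = {a + b*n : n ≥ 0}` inside the positive integers. -/
def golombBasic (a b : ℕ) : Set ℕ+ := {x : ℕ+ | ∃ n : ℕ, (x : ℕ) = a + b * n}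

/-- The Golomb topology on the positive integers, generated by the arithmetic
progressions `a + bℕ₀` with coprime `a, b ∈ ℕ`. -/
instance golombTopology : TopologicalSpace ℕ+ :=
  generateFrom {S : Set ℕ+ | ∃ a b : ℕ, 0 < a ∧ 0 < b ∧ Nat.Coprime a b ∧ S = golombBasic a b}

/-- The positive integers not divisible by `p` (the set `ℕ \ pℕ`). -/
abbrev Np (p : ℕ) : Type := {x : ℕ+ // ¬ p ∣ (x : ℕ)}

/-- The `p`-adic topology on `ℕ \ pℕ`, generated by the traces of the sets
`x + p^nℕ₀`, `x, n ∈ ℕ`. -/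
def padicTop (p : ℕ) : TopologicalSpace (Np p) :=
  generateFrom {S : Set (Np p) | ∃ x n : ℕ, 0 < x ∧ 0 < n ∧
    S = {y : Np p | ∃ k : ℕ, ((y : ℕ+) : ℕ) = x + p ^ n * k}}

/-- Closure of a set of positive integers in the `p`-adic topology on `ℕ \ pℕ`,
viewed again as a set of positive integers. -/
def padicClosure (p : ℕ) (A : Set ℕ+) : Set ℕ+ :=
  Subtype.val '' (@closure (Np p) (padicTop p) (Subtype.val ⁻¹' A))

/-- `a^ℕ = {a^k : k ∈ ℕ}`, the set of positive powers of `a`. -/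
def powSet (a : ℕ) : Set ℕ+ := {y : ℕ+ | ∃ k : ℕ, 0 < k ∧ (y : ℕ) = a ^ k}

/-- The closure of `a^ℕ` in the `p`-adic topology on `ℕ \ pℕ`. -/
def clPow (p a : ℕ) : Set ℕ+ := padicClosure p (powSet a)

/-- The family `𝒳_p` of closures of the sets `a^ℕ` for `a ∈ ℕ \ pℕ`, `a ≠ 1`. -/
def XX (p : ℕ) : Set (Set ℕ+) := {X | ∃ a : ℕ, 0 < a ∧ a ≠ 1 ∧ ¬ p ∣ a ∧ X = clPow p a}

/-- The projection `π_n(X)` of a set of positive integers to `ℤ/p^nℤ`. -/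
def pin (p n : ℕ) (X : Set ℕ+) : Set (ZMod (p ^ n)) :=
  (fun y : ℕ+ => ((y : ℕ) : ZMod (p ^ n))) '' X

/-- `n(X)`: the least `n ∈ ℕ` with `X = ℕ ∩ π_n⁻¹(π_n(X))` and `|π_n(X)| ≥ max(p,3)`. -/
noncomputable def nX (p : ℕ) (X : Set ℕ+) : ℕ :=
  sInf {n : ℕ | 0 < n ∧ X = {y : ℕ+ | ((y : ℕ) : ZMod (p ^ n)) ∈ pin p n X} ∧
    max p 3 ≤ (pin p n X).ncard}

/-- `i(X)`: the index of the subgroup `π_{n(X)}(X)` in the group of units of `ℤ/p^{n(X)}ℤ`. -/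
noncomputable def iX (p : ℕ) (X : Set ℕ+) : ℕ :=
  Nat.card ((ZMod (p ^ nX p X))ˣ) / (pin p (nX p X) X).ncard

/-!
Suppose `a ^ r = 1 + p ^ m * c` with `p ∤ c`, where `m ≥ 2` if `p = 2`. By lifting the exponent,
`a ^ r` has order `p ^ n` modulo `p ^ (n + m)`, which is also the number of units congruent to `1`
modulo `p ^ m`; hence those units are powers of `a`. So a number congruent to a power of `a` modulo
`p ^ m` is congruent to a power of `a` modulo every power of `p`: the closure of `a^ℕ` is the full
preimage of the residues of the powers of `a` modulo `p ^ m`.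

For `p = 2` both `a = 1 + 2 ^ n` and `a = 2 ^ n - 1` satisfy `a ^ 2 = 1 + 2 ^ (n + 1) * c` with
`c = 2 ^ (n - 1) ± 1` odd, so the closure is given by the two residues `1, a` modulo `2 ^ (n + 1)`.
It has at most two residues modulo `2 ^ l` for `l ≤ n + 1` and four modulo `2 ^ (n + 2)`, so
`n(X) = n + 2` and `i(X) = 2 ^ (n + 1) / 4`.
-/

section Progressions

lemma mem_golombBasic_iff {a b : ℕ} {x : ℕ+} :
    x ∈ golombBasic a b ↔ a ≤ (x : ℕ) ∧ ((x : ℕ) : ZMod b) = (a : ZMod b) := by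
  rw [eq_comm, ZMod.natCast_eq_natCast_iff]
  constructor
  · rintro ⟨k, hk⟩
    exact ⟨hk ▸ Nat.le_add_right _ _, by rw [hk]; simp [Nat.ModEq]⟩
  · rintro ⟨hle, hmod⟩
    obtain ⟨k, hk⟩ := (Nat.modEq_iff_dvd' hle).1 hmod
    exact ⟨k, by omega⟩

lemma mem_golombBasic_iff_of_le {a b : ℕ} (hab : a ≤ b) {x : ℕ+} :
    x ∈ golombBasic a b ↔ ((x : ℕ) : ZMod b) = (a : ZMod b) := by
  rw [mem_golombBasic_iff, and_iff_right_iff_imp]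
  intro hx
  by_contra! hlt
  have hdvd : b ∣ a - x := (Nat.modEq_iff_dvd' hlt.le).1 ((ZMod.natCast_eq_natCast_iff _ _ _).1 hx)
  have hle : b ≤ a - x := Nat.le_of_dvd (Nat.sub_pos_of_lt hlt) hdvd
  have := x.pos
  omega

lemma golombBasic_subset_golombBasic {a b : ℕ} {x : ℕ+} (hx : x ∈ golombBasic a b) :
    golombBasic x b ⊆ golombBasic a b := by
  obtain ⟨k, hk⟩ := hx
  rintro y ⟨l, hl⟩
  exact ⟨k + l, by rw [hl, hk]; ring⟩

lemma antitone_golombBasic_pow (p a : ℕ) : Antitone fun n => golombBasic a (p ^ n) := by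
  rintro m n hmn x ⟨k, hk⟩
  obtain ⟨d, hd⟩ := pow_dvd_pow p hmn
  exact ⟨d * k, by rw [hk, hd, mul_assoc]⟩

lemma golombBasic_two_mul_union (a b : ℕ) :
    golombBasic a (2 * b) ∪ golombBasic (a + b) (2 * b) = golombBasic a b := by
  ext x
  constructor
  · rintro (⟨k, hk⟩ | ⟨k, hk⟩)
    · exact ⟨2 * k, by rw [hk]; ring⟩
    · exact ⟨2 * k + 1, by rw [hk]; ring⟩
  · rintro ⟨k, hk⟩
    obtain ⟨s, rfl | rfl⟩ := k.even_or_odd'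
    · exact Or.inl ⟨s, by rw [hk]; ring⟩
    · exact Or.inr ⟨s, by rw [hk]; ring⟩

/-- The full preimage `ℕ ∩ π_m⁻¹(S)` of a set `S` of residues modulo `p ^ m`; the closed sets
`cl(a^ℕ)` have this shape. -/
def residuePreimage (p m : ℕ) (S : Set (ZMod (p ^ m))) : Set ℕ+ :=
  {y : ℕ+ | ((y : ℕ) : ZMod (p ^ m)) ∈ S}

lemma residuePreimage_pair {p m a b : ℕ} (ha : a ≤ p ^ m) (hb : b ≤ p ^ m) :
    residuePreimage p m {(a : ZMod (p ^ m)), (b : ZMod (p ^ m))} =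
      golombBasic a (p ^ m) ∪ golombBasic b (p ^ m) := by
  ext y
  rw [Set.mem_union, mem_golombBasic_iff_of_le ha, mem_golombBasic_iff_of_le hb]
  rfl

end Progressions

section PadicClosure

lemma hasBasis_nhds_padicTop {p : ℕ} (y : Np p) :
    (@nhds _ (padicTop p) y).HasBasis (fun _ : ℕ => True)
      fun n => Subtype.val ⁻¹' golombBasic (y : ℕ+) (p ^ n) := by
  have hanti : Antitone fun n => (Subtype.val ⁻¹' golombBasic (y : ℕ+) (p ^ n) : Set (Np p)) :=
    fun _ _ h => Set.preimage_mono (antitone_golombBasic_pow p _ h)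
  suffices hnhds : @nhds _ (padicTop p) y =
      ⨅ n, Filter.principal (Subtype.val ⁻¹' golombBasic (y : ℕ+) (p ^ n)) by
    rw [hnhds]
    exact (Filter.HasAntitoneBasis.iInf_principal hanti).toHasBasis
  rw [padicTop, nhds_generateFrom]
  apply le_antisymm
  · exact le_iInf fun n => iInf₂_le_of_le (Subtype.val ⁻¹' golombBasic (y : ℕ+) (p ^ (n + 1)))
      ⟨⟨0, rfl⟩, (y : ℕ+), n + 1, (y : ℕ+).pos, n.succ_pos, rfl⟩
      (Filter.principal_mono.2 (hanti n.le_succ))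
  · refine le_iInf₂ ?_
    rintro _ ⟨hy, x, n, -, -, rfl⟩
    exact iInf_le_of_le n (Filter.principal_mono.2
      (Set.preimage_mono (golombBasic_subset_golombBasic hy)))

lemma mem_padicClosure_iff {p : ℕ} {A : Set ℕ+} (hA : ∀ x ∈ A, ¬ p ∣ (x : ℕ)) {y : ℕ+} :
    y ∈ padicClosure p A ↔ ∀ n, (golombBasic y (p ^ n) ∩ A).Nonempty := by
  let _ := padicTop p
  constructor
  · rintro ⟨w, hw, rfl⟩ n
    obtain ⟨z, hz⟩ := (mem_closure_iff_nhds_basis' (hasBasis_nhds_padicTop w)).1 hw n trivial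
    exact ⟨z, hz⟩
  · intro h
    have hy : ¬ p ∣ (y : ℕ) := by
      obtain ⟨x, ⟨k, hk⟩, hx⟩ := h 1
      intro hdvd
      exact hA x hx (hk ▸ dvd_add hdvd (by simp))
    refine ⟨⟨y, hy⟩, (mem_closure_iff_nhds_basis' (hasBasis_nhds_padicTop _)).2 fun n _ => ?_, rfl⟩
    obtain ⟨x, hxy, hx⟩ := h n
    exact ⟨⟨x, hA x hx⟩, hxy, hx⟩

lemma mem_clPow_iff {p a : ℕ} (hp : p.Prime) (ha : 1 < a) (hpa : ¬ p ∣ a) {y : ℕ+} :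
    y ∈ clPow p a ↔
      ∀ n, ((y : ℕ) : ZMod (p ^ n)) ∈ Submonoid.powers (a : ZMod (p ^ n)) := by
  have hA : ∀ x ∈ powSet a, ¬ p ∣ (x : ℕ) := by
    rintro x ⟨k, -, hk⟩ h
    exact hpa (hp.dvd_of_dvd_pow (hk ▸ h))
  rw [clPow, mem_padicClosure_iff hA]
  refine forall_congr' fun n => ?_
  constructor
  · rintro ⟨x, hxy, k, -, hk⟩
    exact ⟨k, by rw [← (mem_golombBasic_iff.1 hxy).2, hk, Nat.cast_pow]⟩
  · rintro ⟨k, hk : (a : ZMod (p ^ n)) ^ k = (y : ℕ)⟩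
    -- Adding multiples of `φ (p ^ n)` to the exponent pushes the power beyond `y`.
    set e := k + (p ^ n).totient * y with he
    have hcop : a.Coprime (p ^ n) := (((hp.coprime_iff_not_dvd).2 hpa).symm).pow_right n
    have hye : (y : ℕ) ≤ e := (Nat.le_mul_of_pos_left _
      (Nat.totient_pos.2 (pow_pos hp.pos n))).trans (Nat.le_add_left _ _)
    have hphi : (a : ZMod (p ^ n)) ^ (p ^ n).totient = 1 := by
      exact_mod_cast (ZMod.natCast_eq_natCast_iff _ _ _).2 (Nat.ModEq.pow_totient hcop)
    have hcast : ((a ^ e : ℕ) : ZMod (p ^ n)) = (y : ℕ) := by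
      rw [Nat.cast_pow, he, pow_add, pow_mul, hphi, one_pow, mul_one, hk]
    exact ⟨⟨a ^ e, by positivity⟩,
      mem_golombBasic_iff.2 ⟨hye.trans (Nat.lt_pow_self ha).le, hcast⟩,
      e, y.pos.trans_le hye, rfl⟩

end PadicClosure

section PrincipalUnits

lemma card_ker_unitsMap_mul_totient {d n : ℕ} [NeZero n] (h : d ∣ n) :
    Nat.card (ZMod.unitsMap h).ker * d.totient = n.totient := by
  have : NeZero d := ⟨ne_zero_of_dvd_ne_zero (NeZero.ne n) h⟩
  have hrange : Nat.card (ZMod.unitsMap h).range = d.totient := by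
    rw [MonoidHom.range_eq_top.2 (ZMod.unitsMap_surjective h), Subgroup.card_top,
      Nat.card_eq_fintype_card, ZMod.card_units_eq_totient]
  rw [← hrange, ← Subgroup.index_ker, Subgroup.card_mul_index, Nat.card_eq_fintype_card,
    ZMod.card_units_eq_totient]

variable {p m : ℕ} (hp : p.Prime)
include hp

lemma one_lt_of_pow_eq_one_add {a c r : ℕ} (hc : ¬ p ∣ c) (har : a ^ r = 1 + p ^ m * c) :
    1 < a := by
  have hcpos : 0 < c := Nat.pos_of_ne_zero fun h => hc (h ▸ dvd_zero p)
  refine lt_of_pow_lt_pow_left₀ r (Nat.zero_le a) ?_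
  rw [one_pow, har]
  exact Nat.lt_add_of_pos_right (mul_pos (pow_pos hp.pos m) hcpos)

lemma not_dvd_of_pow_eq_one_add {a c r : ℕ} (hm : m ≠ 0) (hc : ¬ p ∣ c)
    (har : a ^ r = 1 + p ^ m * c) : ¬ p ∣ a := by
  intro hpa
  have hr : r ≠ 0 := by
    rintro rfl
    have hzero : p ^ m * c = 0 := by simpa using har
    have hc0 : c = 0 := (mul_eq_zero.1 hzero).resolve_left (pow_ne_zero m hp.ne_zero)
    exact hc (hc0 ▸ dvd_zero p)
  have hdvd : p ∣ 1 + p ^ m * c := har ▸ dvd_pow hpa hr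
  exact hp.not_dvd_one ((Nat.dvd_add_left ((dvd_pow_self p hm).mul_right c)).1 hdvd)

lemma clPow_mem_XX {a c r : ℕ} (hm : m ≠ 0) (hc : ¬ p ∣ c) (har : a ^ r = 1 + p ^ m * c) :
    clPow p a ∈ XX p :=
  have h1 : 1 < a := one_lt_of_pow_eq_one_add hp hc har
  ⟨a, zero_lt_one.trans h1, h1.ne', not_dvd_of_pow_eq_one_add hp hm hc har, rfl⟩

-- `m + 2 ≤ p * m` means `1 ≤ m` for odd `p` and `2 ≤ m` for `p = 2`.
variable (hpm : m + 2 ≤ p * m)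
include hpm

lemma zpowers_eq_ker_unitsMap {c : ℤ} (hc : ¬ (p : ℤ) ∣ c) {n : ℕ} {u : (ZMod (p ^ (n + m)))ˣ}
    (hu : (u : ZMod (p ^ (n + m))) = 1 + p ^ m * c) :
    Subgroup.zpowers u = (ZMod.unitsMap (pow_dvd_pow p (Nat.le_add_left m n))).ker := by
  have hm : m ≠ 0 := by rintro rfl; omega
  have : NeZero p := ⟨hp.ne_zero⟩
  have horder : orderOf u = p ^ n := by
    rw [← orderOf_units, hu]
    exact ZMod.orderOf_one_add_mul_prime_pow hp m hm hpm c hc n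
  have hcard : Nat.card (ZMod.unitsMap (pow_dvd_pow p (Nat.le_add_left m n))).ker = p ^ n := by
    refine Nat.eq_of_mul_eq_mul_right (Nat.totient_pos.2 (pow_pos hp.pos m)) ?_
    rw [card_ker_unitsMap_mul_totient, Nat.totient_prime_pow hp (by omega),
      Nat.totient_prime_pow hp (by omega), Nat.add_sub_assoc (by omega), pow_add, mul_assoc]
  refine Subgroup.eq_of_le_of_card_ge ?_ (by rw [hcard, Nat.card_zpowers, horder])
  rw [Subgroup.zpowers_le, MonoidHom.mem_ker, Units.ext_iff, ZMod.unitsMap_def, Units.coe_map, hu,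
    MonoidHom.coe_coe, map_add, map_mul, map_pow, map_natCast,
    ZMod.natCast_pow_eq_zero_of_le p le_rfl, zero_mul, add_zero, map_one, Units.val_one]

lemma ker_unitsMap_le_zpowers {c : ℤ} (hc : ¬ (p : ℤ) ∣ c) {n r : ℕ} {u : (ZMod (p ^ (n + m)))ˣ}
    (hu : (u : ZMod (p ^ (n + m))) ^ r = 1 + p ^ m * c) :
    (ZMod.unitsMap (pow_dvd_pow p (Nat.le_add_left m n))).ker ≤ Subgroup.zpowers u := by
  rw [← Units.val_pow_eq_pow_val] at hu
  rw [← zpowers_eq_ker_unitsMap hp hpm hc hu, Subgroup.zpowers_le]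
  exact Subgroup.npow_mem_zpowers u r

lemma natCast_mem_powers_pow_add {a c r y : ℕ} (hc : ¬ p ∣ c) (har : a ^ r = 1 + p ^ m * c)
    (hy : (y : ZMod (p ^ m)) ∈ Submonoid.powers (a : ZMod (p ^ m))) (n : ℕ) :
    (y : ZMod (p ^ (n + m))) ∈ Submonoid.powers (a : ZMod (p ^ (n + m))) := by
  have : NeZero p := ⟨hp.ne_zero⟩
  have hm : m ≠ 0 := by rintro rfl; omega
  obtain ⟨k, hk : (a : ZMod (p ^ m)) ^ k = y⟩ := hy
  have hpa : ¬ p ∣ a := not_dvd_of_pow_eq_one_add hp hm hc har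
  have hacop (l : ℕ) : a.Coprime (p ^ l) := (((hp.coprime_iff_not_dvd).2 hpa).symm).pow_right l
  have hycop (l : ℕ) : y.Coprime (p ^ l) := by
    have hunit : IsUnit (y : ZMod (p ^ m)) := hk ▸ ((ZMod.isUnit_iff_coprime a _).2 (hacop m)).pow k
    have hym : y.Coprime (p ^ m) := (ZMod.isUnit_iff_coprime y _).1 hunit
    exact (hym.coprime_dvd_right (dvd_pow_self p hm)).pow_right l
  set f := ZMod.unitsMap (pow_dvd_pow p (Nat.le_add_left m n)) with hf
  set u := ZMod.unitOfCoprime a (hacop (n + m)) with hu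
  set v := ZMod.unitOfCoprime y (hycop (n + m)) with hv
  have hur : (u : ZMod (p ^ (n + m))) ^ r = 1 + p ^ m * (c : ℤ) := by
    rw [hu, ZMod.coe_unitOfCoprime]
    exact_mod_cast congrArg (Nat.cast : ℕ → ZMod (p ^ (n + m))) har
  have hker : f.ker ≤ Subgroup.zpowers u :=
    ker_unitsMap_le_zpowers hp hpm (by exact_mod_cast hc) hur
  have hfuv : f v = f u ^ k := by
    ext
    simp [hf, hu, hv, ZMod.unitsMap_def, -ZMod.castHom_apply, hk]
  have hvu : v ∈ Subgroup.zpowers u := by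
    rw [← Subgroup.comap_map_eq_self hker, Subgroup.mem_comap, MonoidHom.map_zpowers, hfuv]
    exact Subgroup.npow_mem_zpowers _ k
  obtain ⟨s, hs : u ^ s = v⟩ := mem_powers_iff_mem_zpowers.2 hvu
  exact ⟨s, by simpa [hu, hv] using congrArg Units.val hs⟩

theorem clPow_eq_residuePreimage {a c r : ℕ} (hc : ¬ p ∣ c) (har : a ^ r = 1 + p ^ m * c) :
    clPow p a = residuePreimage p m (Submonoid.powers (a : ZMod (p ^ m))) := by
  have hm : m ≠ 0 := by rintro rfl; omega
  ext y
  rw [mem_clPow_iff hp (one_lt_of_pow_eq_one_add hp hc har)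
    (not_dvd_of_pow_eq_one_add hp hm hc har)]
  refine ⟨fun h => h m, fun h n => ?_⟩
  obtain ⟨k, hk⟩ := natCast_mem_powers_pow_add hp hpm hc har h n
  refine ⟨k, ?_⟩
  simpa [-ZMod.castHom_apply] using
    congrArg (ZMod.castHom (pow_dvd_pow p (Nat.le_add_right n m)) (ZMod (p ^ n))) hk

end PrincipalUnits

section Index

lemma exists_pnat_natCast_eq {d : ℕ} [NeZero d] (x : ZMod d) : ∃ y : ℕ+, ((y : ℕ) : ZMod d) = x :=
  ⟨⟨x.val + d, by have := NeZero.pos d; omega⟩, by simp⟩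

lemma ncard_preimage_eq_card_ker_mul {G H : Type*} [AddGroup G] [AddGroup H] {f : G →+ H}
    (hf : Function.Surjective f) (T : Set H) :
    (f ⁻¹' T).ncard = Nat.card f.ker * T.ncard := by
  set e := QuotientAddGroup.quotientKerEquivOfSurjective f hf
  have hT : (e ⁻¹' T).ncard = T.ncard := by
    rw [← Nat.card_coe_set_eq, ← Nat.card_coe_set_eq]
    exact Nat.card_congr (e.toEquiv.subtypeEquiv fun _ => Iff.rfl)
  rw [← hT, ← Nat.card_coe_set_eq, ← Nat.card_coe_set_eq, ← Nat.card_prod]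
  exact Nat.card_congr (QuotientAddGroup.preimageMkEquivAddSubgroupProdSet f.ker (e ⁻¹' T))

lemma ncard_castHom_preimage_mul {d n : ℕ} (h : d ∣ n) (T : Set (ZMod d)) :
    (ZMod.castHom h (ZMod d) ⁻¹' T).ncard * d = n * T.ncard := by
  set f : ZMod n →+ ZMod d := (ZMod.castHom h (ZMod d)).toAddMonoidHom
  have hf : Function.Surjective f := ZMod.ringHom_surjective (ZMod.castHom h (ZMod d))
  have hker : Nat.card f.ker * d = n := by
    have hrange : Nat.card f.range = d := by
      rw [AddMonoidHom.range_eq_top.2 hf, AddSubgroup.card_top, Nat.card_zmod]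
    rw [← AddSubgroup.index_ker] at hrange
    calc Nat.card f.ker * d = Nat.card f.ker * f.ker.index := by rw [hrange]
      _ = n := by rw [AddSubgroup.card_mul_index, Nat.card_zmod]
  calc (f ⁻¹' T).ncard * d = Nat.card f.ker * d * T.ncard := by
        rw [ncard_preimage_eq_card_ker_mul hf]; ring
    _ = n * T.ncard := by rw [hker]

variable {p m : ℕ} [NeZero p]

lemma pin_residuePreimage_of_le (S : Set (ZMod (p ^ m))) {l : ℕ} (h : m ≤ l) :
    pin p l (residuePreimage p m S) =
      ZMod.castHom (pow_dvd_pow p h) (ZMod (p ^ m)) ⁻¹' S := by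
  ext x
  constructor
  · rintro ⟨y, hy, rfl⟩
    rw [Set.mem_preimage, map_natCast]
    exact hy
  · intro hx
    obtain ⟨y, rfl⟩ := exists_pnat_natCast_eq x
    rw [Set.mem_preimage, map_natCast] at hx
    exact ⟨y, hx, rfl⟩

lemma ncard_pin_residuePreimage_le (S : Set (ZMod (p ^ m))) {l : ℕ} (h : l ≤ m) :
    (pin p l (residuePreimage p m S)).ncard ≤ S.ncard := by
  refine (Set.ncard_le_ncard ?_ (Set.toFinite _)).trans
    (Set.ncard_image_le (f := ZMod.castHom (pow_dvd_pow p h) (ZMod (p ^ l))) S.toFinite)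
  rintro _ ⟨y, hy, rfl⟩
  exact ⟨_, hy, map_natCast _ _⟩

lemma ncard_pin_residuePreimage_succ (S : Set (ZMod (p ^ m))) :
    (pin p (m + 1) (residuePreimage p m S)).ncard = p * S.ncard := by
  rw [pin_residuePreimage_of_le S m.le_succ]
  refine Nat.eq_of_mul_eq_mul_right (NeZero.pos (p ^ m)) ?_
  rw [ncard_castHom_preimage_mul, Nat.succ_eq_add_one, pow_succ]
  ring

lemma setOf_natCast_mem_pin_residuePreimage (S : Set (ZMod (p ^ m))) {l : ℕ} (h : m ≤ l) :
    {y : ℕ+ | ((y : ℕ) : ZMod (p ^ l)) ∈ pin p l (residuePreimage p m S)} =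
      residuePreimage p m S := by
  ext y
  rw [pin_residuePreimage_of_le S h, Set.mem_ofPred_eq, Set.mem_preimage, map_natCast]
  rfl

lemma nX_residuePreimage {S : Set (ZMod (p ^ m))} (hlt : S.ncard < max p 3)
    (hle : max p 3 ≤ p * S.ncard) : nX p (residuePreimage p m S) = m + 1 := by
  refine IsLeast.csInf_eq ⟨⟨m.succ_pos, (setOf_natCast_mem_pin_residuePreimage S m.le_succ).symm,
    hle.trans_eq (ncard_pin_residuePreimage_succ S).symm⟩, ?_⟩
  rintro l ⟨-, -, hl⟩
  by_contra! hlm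
  exact (hl.trans (ncard_pin_residuePreimage_le S (Nat.lt_succ_iff.1 hlm))).not_gt hlt

lemma iX_residuePreimage {S : Set (ZMod (p ^ m))} (hlt : S.ncard < max p 3)
    (hle : max p 3 ≤ p * S.ncard) :
    iX p (residuePreimage p m S) = (p ^ (m + 1)).totient / (p * S.ncard) := by
  rw [iX, nX_residuePreimage hlt hle, ncard_pin_residuePreimage_succ, Nat.card_eq_fintype_card,
    ZMod.card_units_eq_totient]

end Index

section TwoAdic

lemma coe_powers_eq_pair {M : Type*} [Monoid M] {a : M} (ha : a ^ 2 = 1) :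
    (Submonoid.powers a : Set M) = {1, a} := by
  ext x
  constructor
  · rintro ⟨k, rfl⟩
    obtain ⟨s, rfl | rfl⟩ := k.even_or_odd' <;> simp [pow_succ, pow_mul, ha]
  · rintro (rfl | rfl)
    exacts [one_mem _, Submonoid.mem_powers _]

variable {a c n : ℕ} (hn : n ≠ 0) (hc : Odd c) (ha : a ^ 2 = 1 + 2 ^ (n + 1) * c)
include hn hc ha

lemma clPow_two_eq_residuePreimage :
    clPow 2 a = residuePreimage 2 (n + 1) {1, (a : ZMod (2 ^ (n + 1)))} := by
  have hsq : (a : ZMod (2 ^ (n + 1))) ^ 2 = 1 := by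
    rw [← Nat.cast_pow, ha]
    simp
  rw [clPow_eq_residuePreimage Nat.prime_two (by omega) hc.not_two_dvd_nat ha,
    coe_powers_eq_pair hsq]

variable (hlt : a < 2 ^ (n + 1))
include hlt

lemma clPow_two_eq_union :
    clPow 2 a = golombBasic 1 (2 ^ (n + 1)) ∪ golombBasic a (2 ^ (n + 1)) := by
  rw [clPow_two_eq_residuePreimage hn hc ha, ← residuePreimage_pair Nat.one_le_two_pow hlt.le,
    Nat.cast_one]

lemma iX_clPow_two : iX 2 (clPow 2 a) = 2 ^ (n - 1) := by
  have h1 : 1 < a := one_lt_of_pow_eq_one_add Nat.prime_two hc.not_two_dvd_nat ha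
  have hne : (1 : ZMod (2 ^ (n + 1))) ≠ a := by
    intro h
    have hmod : 1 ≡ a [MOD 2 ^ (n + 1)] :=
      (ZMod.natCast_eq_natCast_iff _ _ _).1 (Nat.cast_one.trans h)
    exact h1.ne (hmod.eq_of_lt_of_lt (h1.trans hlt) hlt)
  have hcard : ({1, (a : ZMod (2 ^ (n + 1)))} : Set _).ncard = 2 := Set.ncard_pair hne
  obtain ⟨k, rfl⟩ := Nat.exists_eq_add_one_of_ne_zero hn
  rw [clPow_two_eq_residuePreimage hn hc ha, iX_residuePreimage (by simp [hcard]) (by simp [hcard]),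
    hcard, Nat.totient_prime_pow_succ Nat.prime_two]
  have hmul : 2 ^ (k + 2) * (2 - 1) = 2 ^ (k + 1 - 1) * (2 * 2) := by
    rw [Nat.add_sub_cancel, pow_succ]
    ring
  exact Nat.div_eq_of_eq_mul_left (by norm_num) hmul

end TwoAdic

lemma one_add_two_pow_sq (n : ℕ) :
    (1 + 2 ^ (n + 1)) ^ 2 = 1 + 2 ^ (n + 2) * (1 + 2 ^ n) := by
  ring

lemma two_pow_sub_one_sq (n : ℕ) :
    (2 ^ (n + 1) - 1) ^ 2 = 1 + 2 ^ (n + 2) * (2 ^ n - 1) := by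
  zify [Nat.one_le_two_pow (n := n), Nat.one_le_two_pow (n := n + 1)]
  ring

/-- For `n ≥ 2`: `cl((1+2^n)^ℕ) ∈ 𝒳_2` equals `1 + 2^nℕ₀` and has index `2^{n-1}`;
`cl((2^n-1)^ℕ) ∈ 𝒳_2` equals `(1 + 2^{n+1}ℕ₀) ∪ (2^n - 1 + 2^{n+1}ℕ₀)` and has index
`2^{n-1}`. -/
theorem clPow_two_adic_indices (n : ℕ) (hn : 2 ≤ n) :
    (clPow 2 (1 + 2 ^ n) ∈ XX 2 ∧
      clPow 2 (1 + 2 ^ n) = golombBasic 1 (2 ^ n) ∧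
      iX 2 (clPow 2 (1 + 2 ^ n)) = 2 ^ (n - 1)) ∧
    (clPow 2 (2 ^ n - 1) ∈ XX 2 ∧
      clPow 2 (2 ^ n - 1) =
        golombBasic 1 (2 ^ (n + 1)) ∪ golombBasic (2 ^ n - 1) (2 ^ (n + 1)) ∧
      iX 2 (clPow 2 (2 ^ n - 1)) = 2 ^ (n - 1)) := by
  obtain ⟨k, rfl⟩ := Nat.exists_eq_add_of_le' (one_le_two.trans hn)
  have hk : k ≠ 0 := by omega
  have hlt : 1 + 2 ^ (k + 1) < 2 ^ (k + 1 + 1) := by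
    have := Nat.one_lt_two_pow k.succ_ne_zero
    rw [pow_succ 2 (k + 1)]
    omega
  have hlt' : 2 ^ (k + 1) - 1 < 2 ^ (k + 1 + 1) := by omega
  have heven : Even (2 ^ k) := even_two.pow_of_ne_zero hk
  have hodd : Odd (1 + 2 ^ k) := odd_one.add_even heven
  have hodd' : Odd (2 ^ k - 1) := Nat.Even.sub_odd Nat.one_le_two_pow heven odd_one
  have hsq := one_add_two_pow_sq k
  have hsq' := two_pow_sub_one_sq k
  refine ⟨⟨clPow_mem_XX Nat.prime_two (by omega) hodd.not_two_dvd_nat hsq, ?_,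
      iX_clPow_two k.succ_ne_zero hodd hsq hlt⟩,
    clPow_mem_XX Nat.prime_two (by omega) hodd'.not_two_dvd_nat hsq',
    clPow_two_eq_union k.succ_ne_zero hodd' hsq' hlt',
    iX_clPow_two k.succ_ne_zero hodd' hsq' hlt'⟩
  rw [clPow_two_eq_union k.succ_ne_zero hodd hsq hlt, pow_succ' 2 (k + 1),
    golombBasic_two_mul_union]
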